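/- arXiv:2401.10248 — 4 statements merged into one kernel-verified Lean document; each statement's English description precedes it below -/
import Mathlib

section
/- Let d > 0 and let p₁, p₂, p₃, p₄ be four points in the Euclidean plane ℝ² whose pairwise distances are all at least d. Then the number of unordered pairs {i,j} with dist(pᵢ,pⱼ) = d is at most 5. -/
/-!
If weights `w` summing to zero are put on points pairwise at distance `d`, the resulting vector
has squared norm `d ^ 2 / 2 * ∑ i, w i ^ 2`, so for `d ≠ 0` it vanishes only when `w` does.
Such points are therefore affinely independent, and a space of dimension `n` holds at most `n + 1`
of them. Hence among four points of the plane some pair is not at distance `d`.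
-/

open Finset Module

section Equidistant

variable {ι V P : Type*} [NormedAddCommGroup V] [InnerProductSpace ℝ V] [MetricSpace P]
  [NormedAddTorsor V P] {p : ι → P} {d : ℝ}

theorem inner_weightedVSub_self_of_pairwise_dist_eq
    (hp : Pairwise fun i j ↦ dist (p i) (p j) = d) {s : Finset ι} {w : ι → ℝ}
    (hw : ∑ i ∈ s, w i = 0) :
    inner ℝ (s.weightedVSub p w) (s.weightedVSub p w) = d ^ 2 / 2 * ∑ i ∈ s, w i ^ 2 := by
  classical
  have dist_mul_dist (i j : ι) :
      dist (p i) (p j) * dist (p i) (p j) = d ^ 2 - if i = j then d ^ 2 else 0 := by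
    obtain rfl | hij := eq_or_ne i j
    · simp
    · rw [hp hij, if_neg hij, sub_zero, sq]
  have row_sum (i : ι) (hi : i ∈ s) :
      ∑ j ∈ s, w i * w j * (dist (p i) (p j) * dist (p i) (p j)) = -(d ^ 2 * w i ^ 2) := by
    calc ∑ j ∈ s, w i * w j * (dist (p i) (p j) * dist (p i) (p j))
      _ = w i * d ^ 2 * ∑ j ∈ s, w j - ∑ j ∈ s, if i = j then w i * w j * d ^ 2 else 0 := by
        simp only [dist_mul_dist, mul_sum, ← sum_sub_distrib, mul_sub, mul_ite, mul_zero,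
          mul_right_comm]
      _ = -(d ^ 2 * w i ^ 2) := by
        rw [hw, sum_ite_eq, if_pos hi]
        ring
  rw [EuclideanGeometry.inner_weightedVSub p hw p hw, sum_congr rfl row_sum, sum_neg_distrib,
    neg_neg, ← mul_sum, div_mul_eq_mul_div]

theorem affineIndependent_of_pairwise_dist_eq (hd : d ≠ 0)
    (hp : Pairwise fun i j ↦ dist (p i) (p j) = d) : AffineIndependent ℝ p := by
  intro s w hw hvec
  have sum_sq_eq_zero : ∑ i ∈ s, w i ^ 2 = 0 := by
    have h := inner_weightedVSub_self_of_pairwise_dist_eq hp hw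
    rw [hvec, inner_zero_left, eq_comm] at h
    exact (mul_eq_zero.mp h).resolve_left (by positivity)
  intro i hi
  exact pow_eq_zero_iff two_ne_zero |>.mp <|
    (sum_eq_zero_iff_of_nonneg fun i _ ↦ sq_nonneg (w i)).mp sum_sq_eq_zero i hi

theorem card_le_finrank_add_one_of_pairwise_dist_eq [Fintype ι] [FiniteDimensional ℝ V]
    (hd : d ≠ 0) (hp : Pairwise fun i j ↦ dist (p i) (p j) = d) :
    Fintype.card ι ≤ finrank ℝ V + 1 :=
  (affineIndependent_of_pairwise_dist_eq hd hp).card_le_finrank_succ.trans <|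
    Nat.add_le_add_right (Submodule.finrank_le _) 1

end Equidistant

theorem four_points_at_most_five_pairs_at_min_distance_general
    {ι V P : Type*} [Fintype ι] [LinearOrder ι] [NormedAddCommGroup V] [InnerProductSpace ℝ V]
    [FiniteDimensional ℝ V] [MetricSpace P] [NormedAddTorsor V P] {d : ℝ} (hd : d ≠ 0)
    (p : ι → P) (hcard : finrank ℝ V + 1 < Fintype.card ι) :
    #{q : ι × ι | q.1 < q.2 ∧ dist (p q.1) (p q.2) = d} < (Fintype.card ι).choose 2 := by
  obtain ⟨i, j, hij, hne⟩ : ∃ i j, i < j ∧ dist (p i) (p j) ≠ d := by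
    by_contra! hall
    refine hcard.not_ge (card_le_finrank_add_one_of_pairwise_dist_eq hd (p := p) fun i j hij ↦ ?_)
    obtain hlt | hgt := hij.lt_or_gt
    · exact hall i j hlt
    · exact (dist_comm _ _).trans (hall j i hgt)
  rw [← Fintype.card_product_filter_lt, ← filter_filter]
  exact card_lt_card <| filter_ssubset.mpr ⟨(i, j), by simpa using hij, hne⟩

/-- Four points in the Euclidean plane with pairwise distances at least `d > 0`
have at most 5 unordered pairs at distance exactly `d`. -/
theorem four_points_at_most_five_pairs_at_min_distance
    (d : ℝ) (hd : 0 < d) (p : Fin 4 → EuclideanSpace ℝ (Fin 2))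
    (hsep : ∀ i j : Fin 4, i ≠ j → d ≤ dist (p i) (p j)) :
    (Finset.univ.filter fun q : Fin 4 × Fin 4 =>
        q.1 < q.2 ∧ dist (p q.1) (p q.2) = d).card ≤ 5 :=
  Nat.le_of_lt_succ <|
    four_points_at_most_five_pairs_at_min_distance_general hd.ne' p (by simp)
end

section
/- Let d > 0 and let p₁, p₂, p₃, p₄ be four points in the Euclidean plane ℝ² whose pairwise distances are all at least d, such that exactly 5 of the 6 unordered pairs are at distance exactly d. Then, after relabeling the points, dist(p₁,p₂) = dist(p₁,p₃) = dist(p₂,p₃) = dist(p₂,p₄) = dist(p₃,p₄) = d and dist(p₁,p₄) = √3·d; that is, the four points are the vertices of a rhombus of side d formed by two equilateral triangles of side d sharing an edge. -/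
/-!
Since at least five of the six pairs are at distance `d`, after relabelling every pair except
possibly `{0, 3}` is. The points `0` and `3` then lie on the circles of radius `d` about `1` and
`2`. Two circles in a plane meet in at most two points, and the point reflection in the midpoint of
the centres swaps these two equal circles, hence also `0` and `3`. So the diagonals of the rhombus
bisect each other, and Apollonius' theorem gives the length of the one from `0` to `3`.
-/

open Finset Module

section StrictConvex

variable {V P : Type*} [NormedAddCommGroup V] [NormedSpace ℝ V] [StrictConvexSpace ℝ V]
  [MetricSpace P] [NormedAddTorsor V P]

lemma eq_midpoint_of_dist_eq_dist_midpoint {b c x : P}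
    (hb : dist x b = dist (midpoint ℝ b c) b) (hc : dist x c = dist (midpoint ℝ b c) c) :
    x = midpoint ℝ b c := by
  rw [dist_midpoint_left, Real.norm_two, ← div_eq_inv_mul] at hb
  rw [dist_midpoint_right, Real.norm_two, ← div_eq_inv_mul] at hc
  exact eq_midpoint_of_dist_eq_half (dist_comm b x ▸ hb) hc

end StrictConvex

section Rhombus

variable {V P : Type*} [NormedAddCommGroup V] [InnerProductSpace ℝ V] [MetricSpace P]
  [NormedAddTorsor V P] {a b c x : P} {r d : ℝ}

lemma midpoint_eq_midpoint_of_rhombus (hV : finrank ℝ V = 2) (hax : a ≠ x) (hbc : b ≠ c)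
    (hab : dist a b = r) (hac : dist a c = r) (hxb : dist x b = r) (hxc : dist x c = r) :
    midpoint ℝ a x = midpoint ℝ b c := by
  have : FiniteDimensional ℝ V := .of_finrank_pos (by lia)
  let reflect := AffineIsometryEquiv.pointReflection ℝ (midpoint ℝ b c)
  have reflect_b : reflect b = c := AffineIsometryEquiv.pointReflection_midpoint_left b c
  have reflect_c : reflect c = b := AffineIsometryEquiv.pointReflection_midpoint_right b c
  have dist_reflect_b : dist (reflect a) b = r := by rw [← reflect_c, reflect.dist_map, hac]
  have dist_reflect_c : dist (reflect a) c = r := by rw [← reflect_b, reflect.dist_map, hab]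
  have reflect_a : reflect a = a ∨ reflect a = x :=
    EuclideanGeometry.eq_of_dist_eq_of_dist_eq_of_finrank_eq_two hV hbc hax
      hab hxb dist_reflect_b hac hxc dist_reflect_c
  rcases reflect_a with fixed | swapped
  · have ha : a = midpoint ℝ b c := AffineIsometryEquiv.pointReflection_fixed_iff.mp fixed
    have hx : x = midpoint ℝ b c := eq_midpoint_of_dist_eq_dist_midpoint
      (by rw [← ha, hxb, hab]) (by rw [← ha, hxc, hac])
    exact absurd (ha.trans hx.symm) hax
  · exact midpoint_eq_iff.mpr swapped

lemma dist_sq_add_dist_sq_of_rhombus (hV : finrank ℝ V = 2) (hax : a ≠ x) (hbc : b ≠ c)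
    (hab : dist a b = r) (hac : dist a c = r) (hxb : dist x b = r) (hxc : dist x c = r) :
    dist a x ^ 2 + dist b c ^ 2 = 4 * r ^ 2 := by
  have half_diagonal : dist a (midpoint ℝ b c) = dist a x / 2 := by
    rw [← midpoint_eq_midpoint_of_rhombus hV hax hbc hab hac hxb hxc, dist_left_midpoint,
      Real.norm_two, div_eq_inv_mul]
  have apollonius :=
    EuclideanGeometry.dist_sq_add_dist_sq_eq_two_mul_dist_midpoint_sq_add_half_dist_sq a b c
  rw [hab, hac, half_diagonal] at apollonius
  linarith

lemma dist_eq_sqrt_three_mul_of_equilateral (hV : finrank ℝ V = 2) (hax : a ≠ x)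
    (hab : dist a b = d) (hac : dist a c = d) (hbc : dist b c = d)
    (hxb : dist x b = d) (hxc : dist x c = d) :
    dist a x = √3 * d := by
  have hd : 0 ≤ d := hab ▸ dist_nonneg
  have b_ne_c : b ≠ c := by
    rintro rfl
    obtain rfl : 0 = d := by rw [← hbc, dist_self]
    exact hax ((dist_eq_zero.mp hab).trans (dist_eq_zero.mp hxb).symm)
  have diagonals := dist_sq_add_dist_sq_of_rhombus hV hax b_ne_c hab hac hxb hxc
  rw [hbc] at diagonals
  rw [← sq_eq_sq₀ dist_nonneg (by positivity), mul_pow, Real.sq_sqrt zero_le_three]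
  linarith

end Rhombus

section Relabelling

variable {α : Type*} [Fintype α] [LinearOrder α] {r : α → α → Prop} [DecidableRel r] [Std.Symm r]

lemma exists_ne_forall_rel_of_card_le [Nontrivial α]
    (hcard : #{q : α × α | q.1 < q.2} ≤ #{q : α × α | q.1 < q.2 ∧ r q.1 q.2} + 1) :
    ∃ i j, i ≠ j ∧ ∀ a b, a ≠ b → s(a, b) ≠ s(i, j) → r a b := by
  have at_most_one : #{q : α × α | q.1 < q.2 ∧ ¬ r q.1 q.2} ≤ 1 := by
    have split := card_filter_add_card_filter_not (s := {q : α × α | q.1 < q.2})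
      (fun q ↦ r q.1 q.2)
    simp only [filter_filter] at split
    lia
  obtain ⟨i, j, hij, eq_of_not_rel⟩ :
      ∃ i j, i ≠ j ∧ ∀ a b, a < b → ¬ r a b → a = i ∧ b = j := by
    by_cases all_rel : ∀ a b, a < b → r a b
    · obtain ⟨i, j, hij⟩ := exists_pair_ne α
      exact ⟨i, j, hij, fun a b hab not_rel ↦ absurd (all_rel a b hab) not_rel⟩
    · push Not at all_rel
      obtain ⟨i, j, hij, not_rel_ij⟩ := all_rel
      exact ⟨i, j, hij.ne, fun a b hab not_rel ↦
        Prod.mk.inj <| card_le_one.mp at_most_one (a, b) (by simp [hab, not_rel])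
          (i, j) (by simp [hij, not_rel_ij])⟩
  refine ⟨i, j, hij, fun a b hab hne ↦ by_contra fun not_rel ↦ hne ?_⟩
  rcases hab.lt_or_gt with hlt | hgt
  · obtain ⟨rfl, rfl⟩ := eq_of_not_rel a b hlt not_rel
    rfl
  · obtain ⟨rfl, rfl⟩ := eq_of_not_rel b a hgt (not_rel ∘ symm_of r)
    exact Sym2.eq_swap

lemma exists_perm_forall_rel_of_card_le {u v : α} (huv : u ≠ v)
    (hcard : #{q : α × α | q.1 < q.2} ≤ #{q : α × α | q.1 < q.2 ∧ r q.1 q.2} + 1) :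
    ∃ σ : Equiv.Perm α, ∀ a b, a ≠ b → s(a, b) ≠ s(u, v) → r (σ a) (σ b) := by
  have : Nontrivial α := ⟨u, v, huv⟩
  obtain ⟨i, j, hij, rel⟩ := exists_ne_forall_rel_of_card_le hcard
  obtain ⟨σ, rfl, rfl⟩ : ∃ σ : Equiv.Perm α, σ u = i ∧ σ v = j :=
    MulAction.is_two_pretransitive_iff.mp (Equiv.Perm.isMultiplyPretransitive α 2) huv hij
  refine ⟨σ, fun a b hab hne ↦ rel _ _ (σ.injective.ne hab) ?_⟩
  exact (Sym2.map.injective σ.injective).ne hne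

end Relabelling

theorem four_points_five_tangencies_rigidity_general {V P : Type*} [NormedAddCommGroup V]
    [InnerProductSpace ℝ V] [MetricSpace P] [NormedAddTorsor V P] (hV : finrank ℝ V = 2)
    {d : ℝ} {p : Fin 4 → P} (hp : Function.Injective p)
    (hfive : 5 ≤ #{q : Fin 4 × Fin 4 | q.1 < q.2 ∧ dist (p q.1) (p q.2) = d}) :
    ∃ σ : Equiv.Perm (Fin 4),
      dist (p (σ 0)) (p (σ 1)) = d ∧
      dist (p (σ 0)) (p (σ 2)) = d ∧
      dist (p (σ 1)) (p (σ 2)) = d ∧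
      dist (p (σ 1)) (p (σ 3)) = d ∧
      dist (p (σ 2)) (p (σ 3)) = d ∧
      dist (p (σ 0)) (p (σ 3)) = √3 * d := by
  have : Std.Symm fun i j ↦ dist (p i) (p j) = d := ⟨fun i j h ↦ dist_comm (p i) (p j) ▸ h⟩
  have six_pairs : #{q : Fin 4 × Fin 4 | q.1 < q.2} = 6 := by decide
  obtain ⟨σ, tangent⟩ := exists_perm_forall_rel_of_card_le (u := (0 : Fin 4)) (v := 3)
    (r := fun i j ↦ dist (p i) (p j) = d) (by decide) (by lia)
  have h01 := tangent 0 1 (by decide) (by decide)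
  have h02 := tangent 0 2 (by decide) (by decide)
  have h12 := tangent 1 2 (by decide) (by decide)
  have h31 := tangent 3 1 (by decide) (by decide)
  have h32 := tangent 3 2 (by decide) (by decide)
  have h03 : p (σ 0) ≠ p (σ 3) := (hp.comp σ.injective).ne (by decide)
  exact ⟨σ, h01, h02, h12, dist_comm (p (σ 3)) _ ▸ h31, dist_comm (p (σ 3)) _ ▸ h32,
    dist_eq_sqrt_three_mul_of_equilateral hV h03 h01 h02 h12 h31 h32⟩

/-- Rigidity: if four points in the plane have pairwise distances at least `d > 0`
and exactly 5 of the 6 unordered pairs are at distance exactly `d`, then after a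
relabeling the points form a rhombus of side `d` made of two equilateral triangles
of side `d` sharing an edge, the remaining pair being at distance `√3 · d`. -/
theorem four_points_five_tangencies_rigidity
    (d : ℝ) (hd : 0 < d) (p : Fin 4 → EuclideanSpace ℝ (Fin 2))
    (hsep : ∀ i j : Fin 4, i ≠ j → d ≤ dist (p i) (p j))
    (hfive : (Finset.univ.filter fun q : Fin 4 × Fin 4 =>
        q.1 < q.2 ∧ dist (p q.1) (p q.2) = d).card = 5) :
    ∃ σ : Equiv.Perm (Fin 4),
      dist (p (σ 0)) (p (σ 1)) = d ∧
      dist (p (σ 0)) (p (σ 2)) = d ∧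
      dist (p (σ 1)) (p (σ 2)) = d ∧
      dist (p (σ 1)) (p (σ 3)) = d ∧
      dist (p (σ 2)) (p (σ 3)) = d ∧
      dist (p (σ 0)) (p (σ 3)) = Real.sqrt 3 * d := by
  have hp : Function.Injective p := fun i j hij ↦ by_contra fun hne ↦
    (hd.trans_le (hsep i j hne)).ne' (dist_eq_zero.mpr hij)
  exact four_points_five_tangencies_rigidity_general finrank_euclideanSpace_fin hp hfive.ge
end

section
/- Let g ≥ 1 be an integer, let R > 0, set n = 4g + 2, s = 2R·sin(π/n), and r = s·sin(gπ/(2g+1)) (equivalently r = R·sin(2π/n)). For j = 0, …, n−1 let wⱼ = (R·cos(2πj/n), R·sin(2πj/n)) be the vertices of a regular n-gon of circumradius R centered at the origin. Then the 2g+1 closed disks of radius r centered at the even-indexed vertices w₀, w₂, …, w₄g satisfy: (i) any two distinct centers are at distance ≥ 2r, with equality exactly when the indices differ by 2 modulo n; (ii) hence the disks have pairwise disjoint interiors, and consecutive disks are tangent at the midpoint of the segment from w₂ⱼ to w₂ⱼ₊₂; (iii) these 2g+1 tangency points are pairwise distinct and lie in the interior of the convex hull of {w₀, …, w_{n−1}}.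 -/
open Real Metric

/-!
The even-indexed vertices of a regular `2m`-gon form a regular `m`-gon with side `2r`. A chord of a
circle subtending `k` steps of an `m`-gon has length `2 R sin (π k / m)`, which for `0 < k < m` is
smallest exactly at `k = 1` and `k = m - 1`; this gives the separation of the centers, and strict
convexity of the Euclidean norm makes the tangency point of two adjacent disks the midpoint of
their centers. That midpoint is the odd vertex between them scaled by `cos (π / m) < 1`, so it is
interior as soon as the origin is, and the origin is interior because the vertex set is symmetric
and spans the plane.
-/

section StrictConvexSpace

variable {E P : Type*} [NormedAddCommGroup E] [NormedSpace ℝ E] [StrictConvexSpace ℝ E]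
  [MetricSpace P] [NormedAddTorsor E P]

lemma closedBall_inter_closedBall_eq_singleton_midpoint {x y : P} {r : ℝ}
    (hxy : dist x y = 2 * r) :
    closedBall x r ∩ closedBall y r = {midpoint ℝ x y} := by
  ext z
  simp only [Set.mem_inter_iff, mem_closedBall, Set.mem_singleton_iff]
  constructor
  · rintro ⟨hzx, hzy⟩
    have triangle := dist_triangle_left x y z
    exact eq_midpoint_of_dist_eq_half (by rw [dist_comm x z]; linarith) (by linarith)
  · rintro rfl
    rw [dist_midpoint_left, dist_midpoint_right, hxy, norm_two, inv_mul_cancel_left₀ two_ne_zero]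
    exact ⟨le_rfl, le_rfl⟩

end StrictConvexSpace

section SymmetricConvexHull

section Module

variable {E : Type*} [AddCommGroup E] [Module ℝ E]

lemma zero_mem_of_convex_of_neg_mem {C : Set E} (hC : Convex ℝ C) (hneg : ∀ x ∈ C, -x ∈ C)
    (hne : C.Nonempty) : 0 ∈ C := by
  obtain ⟨x, hx⟩ := hne
  simpa only [midpoint_self_neg] using hC.midpoint_mem hx (hneg x hx)

lemma neg_mem_convexHull_of_neg_mem {S : Set E} (hneg : ∀ x ∈ S, -x ∈ S) :
    ∀ x ∈ convexHull ℝ S, -x ∈ convexHull ℝ S := by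
  intro x hx
  have hsub : -S ⊆ S := fun y hy => by simpa only [neg_neg] using hneg (-y) hy
  have hmem : -x ∈ convexHull ℝ (-S) := by
    rwa [convexHull_neg, Set.neg_mem_neg]
  exact convexHull_mono hsub hmem

end Module

lemma neg_mem_interior_of_neg_mem {G : Type*} [TopologicalSpace G] [InvolutiveNeg G]
    [ContinuousNeg G] {C : Set G} (hneg : ∀ x ∈ C, -x ∈ C) :
    ∀ x ∈ interior C, -x ∈ interior C := by
  intro x hx
  have hsub : -interior C ⊆ C := fun y hy => by
    simpa only [neg_neg] using hneg (-y) (interior_subset hy)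
  exact interior_maximal hsub isOpen_interior.neg (Set.neg_mem_neg.2 hx)

lemma zero_mem_interior_convexHull_of_neg_mem {E : Type*} [NormedAddCommGroup E]
    [NormedSpace ℝ E] [FiniteDimensional ℝ E] {S : Set E}
    (hneg : ∀ x ∈ S, -x ∈ S) (hne : S.Nonempty) (hspan : Submodule.span ℝ S = ⊤) :
    0 ∈ interior (convexHull ℝ S) := by
  have hneg_hull := neg_mem_convexHull_of_neg_mem hneg
  have hzero : 0 ∈ affineSpan ℝ S := convexHull_subset_affineSpan S <|
    zero_mem_of_convex_of_neg_mem (convex_convexHull ℝ S) hneg_hull hne.convexHull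
  have haffine : affineSpan ℝ S = ⊤ := by
    rw [← affineSpan_insert_eq_affineSpan ℝ hzero]
    apply SetLike.coe_injective
    rw [affineSpan_insert_zero, hspan, Submodule.top_coe, AffineSubspace.top_coe]
  exact zero_mem_of_convex_of_neg_mem (convex_convexHull ℝ S).interior
    (neg_mem_interior_of_neg_mem hneg_hull)
    (interior_convexHull_nonempty_iff_affineSpan_eq_top.2 haffine)

lemma smul_mem_interior_of_zero_mem_interior {E : Type*} [AddCommGroup E] [Module ℝ E]
    [TopologicalSpace E] [IsTopologicalAddGroup E] [ContinuousConstSMul ℝ E] {C : Set E}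
    (hC : Convex ℝ C) (hzero : 0 ∈ interior C) {x : E} (hx : x ∈ C)
    {c : ℝ} (hc : 0 ≤ c) (hc1 : c < 1) : c • x ∈ interior C := by
  simpa only [smul_zero, zero_add] using
    hC.combo_interior_self_mem_interior hzero hx (sub_pos.2 hc1) hc (sub_add_cancel 1 c)

end SymmetricConvexHull

section Sine

variable {t x : ℝ}

lemma cos_abs_sub_pi_div_two (x : ℝ) : cos |x - π / 2| = sin x := by
  rw [cos_abs, cos_sub_pi_div_two]

lemma abs_sub_pi_div_two_le_of_mem_Icc (hx : x ∈ Set.Icc t (π - t)) : |x - π / 2| ≤ π / 2 - t :=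
  abs_le.2 ⟨by linarith [hx.1], by linarith [hx.2]⟩

lemma sin_le_sin_of_mem_Icc_pi_sub (ht : -(π / 2) ≤ t) (hx : x ∈ Set.Icc t (π - t)) :
    sin t ≤ sin x := by
  rw [← cos_abs_sub_pi_div_two x, ← cos_pi_div_two_sub t]
  exact cos_le_cos_of_nonneg_of_le_pi (abs_nonneg _) (by linarith)
    (abs_sub_pi_div_two_le_of_mem_Icc hx)

lemma sin_eq_sin_iff_of_mem_Icc_pi_sub (ht : -(π / 2) ≤ t) (hx : x ∈ Set.Icc t (π - t)) :
    sin x = sin t ↔ x = t ∨ x = π - t := by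
  have hle := abs_sub_pi_div_two_le_of_mem_Icc hx
  have hnonneg := abs_nonneg (x - π / 2)
  rw [← cos_abs_sub_pi_div_two x, ← cos_pi_div_two_sub t,
    injOn_cos.eq_iff ⟨hnonneg, by linarith⟩ ⟨by linarith, by linarith⟩, abs_eq (by linarith),
    or_comm]
  exact or_congr ⟨fun h => by linarith, fun h => by linarith⟩
    ⟨fun h => by linarith, fun h => by linarith⟩

lemma sin_mul_pi_div_two_mul_add_one {a : ℝ} (ha : 2 * a + 1 ≠ 0) :
    sin (a * π / (2 * a + 1)) = cos (π / (4 * a + 2)) := by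
  have hangle : a * π / (2 * a + 1) = π / 2 - π / (4 * a + 2) := by
    have ha' : 4 * a + 2 ≠ 0 := fun h => ha (by linarith)
    rw [eq_sub_iff_add_eq, div_add_div _ _ ha ha', div_eq_div_iff (mul_ne_zero ha ha') two_ne_zero]
    ring
  rw [hangle, sin_pi_div_two_sub]

end Sine

section CirclePoint

/-- The point of the plane with polar coordinates `(R, θ)`, for any real `R`: a negative `R` gives
the point antipodal to `(|R|, θ)`. -/
noncomputable def circlePoint (R θ : ℝ) : EuclideanSpace ℝ (Fin 2) :=
  !₂[R * cos θ, R * sin θ]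

lemma dist_circlePoint (R x y : ℝ) :
    dist (circlePoint R x) (circlePoint R y) = 2 * |R| * |sin ((x - y) / 2)| := by
  have hsq : (R * cos x - R * cos y) ^ 2 + (R * sin x - R * sin y) ^ 2 =
      (2 * R * sin ((x - y) / 2)) ^ 2 := by
    rw [← mul_sub, ← mul_sub, cos_sub_cos, sin_sub_sin]
    linear_combination 4 * R ^ 2 * sin ((x - y) / 2) ^ 2 * sin_sq_add_cos_sq ((x + y) / 2)
  rw [EuclideanSpace.dist_eq, Fin.sum_univ_two, Real.dist_eq, Real.dist_eq, sq_abs, sq_abs]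
  change √((R * cos x - R * cos y) ^ 2 + (R * sin x - R * sin y) ^ 2) = _
  rw [hsq, sqrt_sq_eq_abs, abs_mul, abs_mul, abs_two]

lemma midpoint_circlePoint_sub_add (R θ φ : ℝ) :
    midpoint ℝ (circlePoint R (θ - φ)) (circlePoint R (θ + φ)) = cos φ • circlePoint R θ := by
  rw [midpoint_eq_smul_add]
  ext i
  fin_cases i
  · change ⅟2 * (R * cos (θ - φ) + R * cos (θ + φ)) = cos φ * (R * cos θ)
    rw [invOf_eq_inv, cos_sub, cos_add]
    ring
  · change ⅟2 * (R * sin (θ - φ) + R * sin (θ + φ)) = cos φ * (R * sin θ)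
    rw [invOf_eq_inv, sin_sub, sin_add]
    ring

lemma circlePoint_add_pi (R θ : ℝ) : circlePoint R (θ + π) = -circlePoint R θ := by
  ext i
  fin_cases i <;> simp [circlePoint]

lemma linearIndependent_circlePoint {R x y : ℝ} (hR : R ≠ 0) (hxy : sin (y - x) ≠ 0) :
    LinearIndependent ℝ ![circlePoint R x, circlePoint R y] := by
  rw [LinearIndependent.pair_iff]
  intro a b hab
  have hcos : a * (R * cos x) + b * (R * cos y) = 0 := by
    simpa [circlePoint] using congrArg (fun p => p 0) hab
  have hsin : a * (R * sin x) + b * (R * sin y) = 0 := by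
    simpa [circlePoint] using congrArg (fun p => p 1) hab
  have hdet : R * sin (y - x) ≠ 0 := mul_ne_zero hR hxy
  rw [sin_sub] at hdet
  constructor
  · refine (mul_eq_zero.1 ?_).resolve_right hdet
    linear_combination sin y * hcos - cos y * hsin
  · refine (mul_eq_zero.1 ?_).resolve_right hdet
    linear_combination cos x * hsin - sin x * hcos

end CirclePoint

section RegularPolygon

/-- The `k`-th vertex, counterclockwise from the positive first coordinate axis, of the regular
`N`-gon of circumradius `R` centered at the origin; the index is periodic modulo `N`. -/
noncomputable def regularPolygonVertex (R : ℝ) (N k : ℕ) : EuclideanSpace ℝ (Fin 2) :=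
  circlePoint R (2 * π * k / N)

variable {R : ℝ} {N m i j : ℕ}

lemma regularPolygonVertex_two_mul_two_mul (R : ℝ) (m j : ℕ) :
    regularPolygonVertex R (2 * m) (2 * j) = regularPolygonVertex R m j := by
  unfold regularPolygonVertex
  congr 1
  push_cast
  rw [mul_left_comm, mul_div_mul_left _ _ two_ne_zero]

lemma dist_regularPolygonVertex_add (R : ℝ) (i : ℕ) {d : ℕ} (hd : d ≤ N) :
    dist (regularPolygonVertex R N i) (regularPolygonVertex R N (i + d)) =
      2 * |R| * sin (π * d / N) := by
  have hle : π * d / N ≤ π :=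
    div_le_of_le_mul₀ N.cast_nonneg pi_nonneg (by gcongr)
  rw [dist_comm, regularPolygonVertex, regularPolygonVertex, dist_circlePoint]
  have hangle : (2 * π * (i + d : ℕ) / N - 2 * π * i / N) / 2 = π * d / N := by
    push_cast
    ring
  rw [hangle, abs_of_nonneg (sin_nonneg_of_nonneg_of_le_pi (by positivity) hle)]

lemma dist_regularPolygonVertex_succ (R : ℝ) (i : ℕ) (hN : 1 ≤ N) :
    dist (regularPolygonVertex R N i) (regularPolygonVertex R N (i + 1)) =
      2 * |R| * sin (π / N) := by
  rw [dist_regularPolygonVertex_add R i hN, Nat.cast_one, mul_one]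

lemma pi_mul_div_mem_Icc_pi_sub {d : ℕ} (hd : 0 < d) (hdN : d < N) :
    π * d / N ∈ Set.Icc (π / N) (π - π / N) := by
  have hN : (0 : ℝ) < N := by exact_mod_cast hd.trans hdN
  have hd' : (1 : ℝ) ≤ d := by exact_mod_cast hd
  have hdN' : (d : ℝ) + 1 ≤ N := by exact_mod_cast hdN
  constructor
  · gcongr
    exact le_mul_of_one_le_right pi_nonneg hd'
  · rw [le_sub_iff_add_le, ← add_div, div_le_iff₀ hN]
    nlinarith [pi_pos]

lemma side_le_dist_regularPolygonVertex (R : ℝ) (hi : i < N) (hj : j < N) (hij : i ≠ j) :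
    2 * |R| * sin (π / N) ≤ dist (regularPolygonVertex R N i) (regularPolygonVertex R N j) := by
  wlog hlt : i < j generalizing i j
  · rw [dist_comm]
    exact this hj hi hij.symm (by omega)
  obtain ⟨d, rfl⟩ := Nat.exists_eq_add_of_le hlt.le
  rw [dist_regularPolygonVertex_add R i (by omega)]
  gcongr
  exact sin_le_sin_of_mem_Icc_pi_sub (by linarith [pi_pos, show 0 ≤ π / N by positivity])
    (pi_mul_div_mem_Icc_pi_sub (by omega) (by omega))

lemma sin_pi_mul_div_eq_sin_pi_div_iff {d : ℕ} (hd : 0 < d) (hdN : d < N) :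
    sin (π * d / N) = sin (π / N) ↔ d = 1 ∨ d + 1 = N := by
  have hN : (N : ℝ) ≠ 0 := by exact_mod_cast (hd.trans hdN).ne'
  rw [sin_eq_sin_iff_of_mem_Icc_pi_sub (by linarith [pi_pos, show 0 ≤ π / N by positivity])
    (pi_mul_div_mem_Icc_pi_sub hd hdN), eq_sub_iff_add_eq, ← add_div, div_left_inj' hN,
    div_eq_iff hN, mul_eq_left₀ pi_ne_zero, ← mul_add_one, mul_right_inj' pi_ne_zero]
  norm_cast

lemma dist_regularPolygonVertex_eq_side_iff (hR : R ≠ 0) (hi : i < N) (hj : j < N)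
    (hij : i ≠ j) :
    dist (regularPolygonVertex R N i) (regularPolygonVertex R N j) = 2 * |R| * sin (π / N) ↔
      (i + 1) % N = j ∨ (j + 1) % N = i := by
  wlog hlt : i < j generalizing i j
  · rw [dist_comm, or_comm]
    exact this hj hi hij.symm (by omega)
  obtain ⟨d, rfl⟩ := Nat.exists_eq_add_of_le hlt.le
  rw [dist_regularPolygonVertex_add R i (by omega), mul_right_inj' (by positivity),
    sin_pi_mul_div_eq_sin_pi_div_iff (by omega) (by omega), Nat.mod_eq_of_lt (by omega : i + 1 < N)]
  rcases (show i + d + 1 ≤ N from hj).eq_or_lt with hlast | hlast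
  · rw [hlast, Nat.mod_self]
    omega
  · rw [Nat.mod_eq_of_lt hlast]
    omega

lemma regularPolygonVertex_ne (hR : R ≠ 0) (hi : i < N) (hj : j < N) (hij : i ≠ j) :
    regularPolygonVertex R N i ≠ regularPolygonVertex R N j := by
  have hN : (1 : ℝ) < N := by exact_mod_cast (by omega : 1 < N)
  have hside : 0 < sin (π / N) :=
    sin_pos_of_pos_of_lt_pi (by positivity) (div_lt_self pi_pos hN)
  exact dist_pos.1 <| (show 0 < 2 * |R| * sin (π / N) by positivity).trans_le
    (side_le_dist_regularPolygonVertex R hi hj hij)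

lemma midpoint_regularPolygonVertex_add_two (R : ℝ) (N k : ℕ) :
    midpoint ℝ (regularPolygonVertex R N k) (regularPolygonVertex R N (k + 2)) =
      cos (2 * π / N) • regularPolygonVertex R N (k + 1) := by
  unfold regularPolygonVertex
  rw [← midpoint_circlePoint_sub_add]
  congr 2 <;> push_cast <;> ring

lemma regularPolygonVertex_two_mul_add (R : ℝ) (hm : m ≠ 0) (k : ℕ) :
    regularPolygonVertex R (2 * m) (k + m) = -regularPolygonVertex R (2 * m) k := by
  rw [regularPolygonVertex, regularPolygonVertex, ← circlePoint_add_pi]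
  congr 1
  push_cast
  field_simp

lemma neg_mem_image_regularPolygonVertex (R : ℝ) (m : ℕ) :
    ∀ p ∈ regularPolygonVertex R (2 * m) '' {k | k < 2 * m},
      -p ∈ regularPolygonVertex R (2 * m) '' {k | k < 2 * m} := by
  rintro _ ⟨k, hk : k < 2 * m, rfl⟩
  have hm : m ≠ 0 := by omega
  rcases lt_or_ge k m with hkm | hmk
  · exact ⟨k + m, show k + m < 2 * m by omega, regularPolygonVertex_two_mul_add R hm k⟩
  · refine ⟨k - m, show k - m < 2 * m by omega, ?_⟩
    rw [← neg_eq_iff_eq_neg, ← regularPolygonVertex_two_mul_add R hm, Nat.sub_add_cancel hmk]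

lemma span_image_regularPolygonVertex (hR : R ≠ 0) (hN : 3 ≤ N) :
    Submodule.span ℝ (regularPolygonVertex R N '' {k | k < N}) = ⊤ := by
  have hN' : (2 : ℝ) < N := by exact_mod_cast hN
  have hsin : sin (2 * π * (1 : ℕ) / N - 2 * π * (0 : ℕ) / N) ≠ 0 := by
    rw [Nat.cast_one, Nat.cast_zero, mul_one, mul_zero, zero_div, sub_zero]
    refine (sin_pos_of_pos_of_lt_pi (by positivity) ?_).ne'
    rw [div_lt_iff₀ (by positivity), mul_comm]
    gcongr
  have hpair := (linearIndependent_circlePoint hR hsin).span_eq_top_of_card_eq_finrank (by simp)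
  refine top_unique (hpair.ge.trans (Submodule.span_mono ?_))
  rw [Matrix.range_cons_cons_empty]
  exact Set.pair_subset ⟨0, show 0 < N by omega, rfl⟩ ⟨1, show 1 < N by omega, rfl⟩

lemma smul_regularPolygonVertex_mem_interior (hR : R ≠ 0) (hm : 2 ≤ m) {k : ℕ} (hk : k < 2 * m)
    {c : ℝ} (hc : 0 ≤ c) (hc1 : c < 1) :
    c • regularPolygonVertex R (2 * m) k ∈
      interior (convexHull ℝ (regularPolygonVertex R (2 * m) '' {k | k < 2 * m})) := by
  have hvertex : regularPolygonVertex R (2 * m) k ∈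
      regularPolygonVertex R (2 * m) '' {k | k < 2 * m} := ⟨k, hk, rfl⟩
  exact smul_mem_interior_of_zero_mem_interior (convex_convexHull ℝ _)
    (zero_mem_interior_convexHull_of_neg_mem (neg_mem_image_regularPolygonVertex R m)
      ⟨_, hvertex⟩ (span_image_regularPolygonVertex hR (by omega)))
    (subset_convexHull ℝ _ hvertex) hc hc1

lemma cos_two_pi_div_mem_Ioo (hN : 5 ≤ N) : cos (2 * π / N) ∈ Set.Ioo 0 1 := by
  have hN' : (4 : ℝ) < N := by exact_mod_cast hN
  have hpos : 0 < 2 * π / N := by positivity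
  have hlt : 2 * π / N < π / 2 := by
    rw [div_lt_div_iff₀ (by positivity) two_pos]
    nlinarith [pi_pos]
  refine ⟨cos_pos_of_mem_Ioo ⟨by linarith, hlt⟩, ?_⟩
  simpa only [cos_zero] using cos_lt_cos_of_nonneg_of_le_pi_div_two le_rfl hlt.le hpos

end RegularPolygon

theorem regular_4g_plus_2_gon_packing_2g_plus_1_multiloops_general
    (m : ℕ) (hm : 3 ≤ m) (R s r : ℝ) (hR : 0 < R) (n : ℕ) (hn : n = 2 * m)
    (hs : s = 2 * R * Real.sin (π / n))
    (hr : r = s * Real.cos (π / n))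
    (w : ℕ → EuclideanSpace ℝ (Fin 2))
    (hw : ∀ j : ℕ, w j = ![R * Real.cos (2 * π * j / n), R * Real.sin (2 * π * j / n)]) :
    r = R * Real.sin (2 * π / n) ∧
    (∀ j l : ℕ, j < m → l < m → j ≠ l →
      2 * r ≤ dist (w (2 * j)) (w (2 * l)) ∧
      (dist (w (2 * j)) (w (2 * l)) = 2 * r ↔ (j + 1) % m = l ∨ (l + 1) % m = j)) ∧
    (∀ j l : ℕ, j < m → l < m → j ≠ l →
      Disjoint (interior (closedBall (w (2 * j)) r))
        (interior (closedBall (w (2 * l)) r))) ∧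
    (∀ j : ℕ, j < m →
      closedBall (w (2 * j)) r ∩ closedBall (w (2 * j + 2)) r
        = {midpoint ℝ (w (2 * j)) (w (2 * j + 2))}) ∧
    (∀ j l : ℕ, j < m → l < m → j ≠ l →
      midpoint ℝ (w (2 * j)) (w (2 * j + 2)) ≠ midpoint ℝ (w (2 * l)) (w (2 * l + 2))) ∧
    (∀ j : ℕ, j < m →
      midpoint ℝ (w (2 * j)) (w (2 * j + 2)) ∈
        interior (convexHull ℝ (w '' {k | k < n}))) := by
  obtain rfl : w = regularPolygonVertex R n := funext fun j => PiLp.ext (congrFun (hw j))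
  subst hn
  have hradius : r = R * sin (2 * π / (2 * m : ℕ)) := by
    rw [hr, hs, mul_div_assoc 2 π, sin_two_mul]
    ring
  have hside : 2 * r = 2 * |R| * sin (π / m) := by
    rw [hradius, abs_of_pos hR, Nat.cast_mul, Nat.cast_two, mul_div_mul_left _ _ two_ne_zero,
      mul_assoc]
  have hsep (j l : ℕ) (hj : j < m) (hl : l < m) (hjl : j ≠ l) :
      2 * r ≤ dist (regularPolygonVertex R m j) (regularPolygonVertex R m l) :=
    hside ▸ side_le_dist_regularPolygonVertex R hj hl hjl
  obtain ⟨hcos_pos, hcos_lt⟩ := cos_two_pi_div_mem_Ioo (show 5 ≤ 2 * m by omega)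
  simp only [midpoint_regularPolygonVertex_add_two]
  refine ⟨hradius, fun j l hj hl hjl => ?_, fun j l hj hl hjl => ?_, fun j _ => ?_,
    fun j l hj hl hjl => ?_, fun j hj => ?_⟩
  · simp only [regularPolygonVertex_two_mul_two_mul]
    exact ⟨hsep j l hj hl hjl, hside ▸ dist_regularPolygonVertex_eq_side_iff hR.ne' hj hl hjl⟩
  · simp only [regularPolygonVertex_two_mul_two_mul, interior_closedBall']
    exact ball_disjoint_ball (two_mul r ▸ hsep j l hj hl hjl)
  · rw [← midpoint_regularPolygonVertex_add_two]
    refine closedBall_inter_closedBall_eq_singleton_midpoint ?_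
    rw [← mul_add_one, regularPolygonVertex_two_mul_two_mul, regularPolygonVertex_two_mul_two_mul,
      dist_regularPolygonVertex_succ R j (by omega), hside]
  · exact (smul_right_injective _ hcos_pos.ne').ne
      (regularPolygonVertex_ne hR.ne' (by omega) (by omega) (by omega))
  · exact smul_regularPolygonVertex_mem_interior hR.ne' (by omega) (by omega) hcos_pos.le hcos_lt

/-- The packing on a regular `(4g+2)`-gon realizing `2g+1` multi-loops: the `2g+1`
disks of radius `r = s·sin(gπ/(2g+1))` centered at the even-indexed vertices of a
regular `n`-gon (`n = 4g+2`, side `s = 2R·sin(π/n)`) have pairwise disjoint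
interiors, any two centers are at distance `≥ 2r` with equality exactly for
consecutive even vertices, consecutive disks are tangent at the midpoint of the
corresponding short diagonal, and the `2g+1` tangency points are pairwise distinct
and lie in the interior of the polygon. -/
theorem regular_4g_plus_2_gon_packing_2g_plus_1_multiloops
    (g : ℕ) (hg : 1 ≤ g) (R s r : ℝ) (hR : 0 < R) (n : ℕ) (hn : n = 4 * g + 2)
    (hs : s = 2 * R * Real.sin (π / n))
    (hr : r = s * Real.sin (g * π / (2 * g + 1)))
    (w : ℕ → EuclideanSpace ℝ (Fin 2))
    (hw : ∀ j : ℕ, w j = ![R * Real.cos (2 * π * j / n), R * Real.sin (2 * π * j / n)]) :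
    r = R * Real.sin (2 * π / n) ∧
    -- (i) separation of the even-indexed centers, with equality exactly for
    -- indices differing by 2 modulo n
    (∀ j l : ℕ, j < 2 * g + 1 → l < 2 * g + 1 → j ≠ l →
      2 * r ≤ dist (w (2 * j)) (w (2 * l)) ∧
      (dist (w (2 * j)) (w (2 * l)) = 2 * r ↔
        (j + 1) % (2 * g + 1) = l ∨ (l + 1) % (2 * g + 1) = j)) ∧
    -- (ii) pairwise disjoint interiors, and consecutive disks tangent at midpoints
    (∀ j l : ℕ, j < 2 * g + 1 → l < 2 * g + 1 → j ≠ l →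
      Disjoint (interior (closedBall (w (2 * j)) r))
        (interior (closedBall (w (2 * l)) r))) ∧
    (∀ j : ℕ, j < 2 * g + 1 →
      closedBall (w (2 * j)) r ∩ closedBall (w (2 * j + 2)) r
        = {midpoint ℝ (w (2 * j)) (w (2 * j + 2))}) ∧
    -- (iii) the 2g+1 tangency points are pairwise distinct and lie in the interior
    -- of the convex hull of the polygon's vertices
    (∀ j l : ℕ, j < 2 * g + 1 → l < 2 * g + 1 → j ≠ l →
      midpoint ℝ (w (2 * j)) (w (2 * j + 2)) ≠ midpoint ℝ (w (2 * l)) (w (2 * l + 2))) ∧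
    (∀ j : ℕ, j < 2 * g + 1 →
      midpoint ℝ (w (2 * j)) (w (2 * j + 2)) ∈
        interior (convexHull ℝ (w '' {k | k < n}))) := by
  have hsin : sin (g * π / (2 * g + 1)) = cos (π / n) := by
    rw [sin_mul_pi_div_two_mul_add_one (by positivity), hn]
    push_cast
    rfl
  exact regular_4g_plus_2_gon_packing_2g_plus_1_multiloops_general (2 * g + 1) (by omega) R s r hR n
    (by omega) hs (hsin ▸ hr) w hw
end

section
/- Let g ≥ 2 be an integer and R > 0, and set s = 2R·sin(π/(2g)). Identify ℝ² with ℂ, and for j ∈ ℤ let Bⱼ = R·e^{iπj/g} and Cⱼ = Bⱼ + e^{−iπ/3}·(Bⱼ₊₁ − Bⱼ); define A₂ⱼ = Bⱼ and A₂ⱼ₊₁ = Cⱼ, indices modulo 4g. Then: (i) |A_{k+1} − Aₖ| = s for every k (all 4g sides of the 4g-gon have length s); (ii) |A₂ⱼ₊₂ − A₂ⱼ| = s for every j (all 2g sides of the underlying regular 2g-gon have length s); (iii) |Aₖ − Aₗ| ≥ s for all k ≢ l (mod 4g). Consequently, the 4g closed disks of radius s/2 centered at A₀, …, A_{4g−1}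 have pairwise disjoint interiors, and each of the 4g pairs (Aₖ, A_{k+1}) and each of the 2g pairs (A₂ⱼ, A₂ⱼ₊₂) is a tangent pair of disks, giving at least 6g tangencies. -/
open Real Complex Metric

/-!
Measured from the centre, the vertex `A k` has argument `k * π / n` (with `n = 2 * g`) and radius
`R` or `ρ ≥ R`, according to the parity of `k`, so all distances follow from the law of cosines.
A nonzero residue modulo `2 * n` is at circular distance at least `1` from `0`, and at least `2` if
it is even. Since the cosine decreases with the distance to `2πℤ`, vertices of opposite parity are
closest when their indices differ by `1`, and vertices of equal parity when they differ by `2`.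
-/

lemma cos_le_cos_of_forall_le_abs_sub_int_mul_two_pi {x d : ℝ} (hd : 0 ≤ d)
    (h : ∀ q : ℤ, d ≤ |x - q * (2 * π)|) : Real.cos x ≤ Real.cos d := by
  obtain ⟨q, hq⟩ : ∃ q : ℤ, |x - q * (2 * π)| ≤ π := by
    refine ⟨round (x / (2 * π)), ?_⟩
    have hscale : x - round (x / (2 * π)) * (2 * π)
        = (x / (2 * π) - round (x / (2 * π))) * (2 * π) := by field_simp
    rw [hscale, abs_mul, abs_of_pos two_pi_pos]
    nlinarith [abs_sub_round (x / (2 * π)), pi_pos]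
  rw [← Real.cos_sub_int_mul_two_pi x q, ← Real.cos_abs (x - _)]
  exact Real.cos_le_cos_of_nonneg_of_le_pi hd hq (h q)

lemma cos_int_mul_pi_div_le_cos {n : ℕ} (hn : n ≠ 0) {m : ℤ} {d : ℕ}
    (h : ∀ q : ℤ, (d : ℤ) ≤ |m - 2 * n * q|) :
    Real.cos (m * (π / n)) ≤ Real.cos (d * (π / n)) := by
  refine cos_le_cos_of_forall_le_abs_sub_int_mul_two_pi (by positivity) fun q => ?_
  have hscale : (m : ℝ) * (π / n) - q * (2 * π) = ((m - 2 * n * q : ℤ) : ℝ) * (π / n) := by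
    push_cast
    field_simp
  rw [hscale, abs_mul, abs_of_nonneg (by positivity : 0 ≤ π / n)]
  gcongr
  exact_mod_cast h q

lemma dist_circleMap_sq (c : ℂ) (r t x y : ℝ) :
    dist (circleMap c r x) (circleMap c t y) ^ 2
      = r ^ 2 + t ^ 2 - 2 * r * t * Real.cos (x - y) := by
  simp only [circleMap, dist_add_left, Complex.dist_eq, Complex.sq_norm, Complex.normSq_apply,
    Complex.sub_re, Complex.sub_im, Complex.re_ofReal_mul, Complex.im_ofReal_mul,
    Complex.exp_ofReal_mul_I_re, Complex.exp_ofReal_mul_I_im, Real.cos_sub]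
  linear_combination r ^ 2 * Real.sin_sq_add_cos_sq x + t ^ 2 * Real.sin_sq_add_cos_sq y

section Disks

variable {E : Type*} [NormedAddCommGroup E] [NormedSpace ℝ E] {x y : E} {s : ℝ}

lemma disjoint_interior_closedBall_half [Nontrivial E] (h : s ≤ dist x y) :
    Disjoint (interior (closedBall x (s / 2))) (interior (closedBall y (s / 2))) := by
  rw [interior_closedBall', interior_closedBall']
  exact ball_disjoint_ball (by linarith)

lemma nonempty_closedBall_half_inter (h : dist y x = s) :
    (closedBall x (s / 2) ∩ closedBall y (s / 2)).Nonempty := by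
  have hs : 0 ≤ s / 2 := by rw [← h]; positivity
  rw [← Set.not_disjoint_iff_nonempty_inter, disjoint_closedBall_closedBall_iff hs hs,
    dist_comm, h]
  linarith

end Disks

/-- The distance from the centre of a circle of radius `R` to the apex of the equilateral triangle
erected externally on a chord of half-angle `a`: the apothem `R cos a` of the chord plus the height
`√3 R sin a` of the triangle. -/
noncomputable def apexRadius (R a : ℝ) : ℝ := R * (Real.cos a + √3 * Real.sin a)

lemma apexRadius_eq_two_mul_cos (R a : ℝ) : apexRadius R a = R * (2 * Real.cos (π / 3 - a)) := by
  rw [apexRadius, Real.cos_sub, Real.cos_pi_div_three, Real.sin_pi_div_three]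
  ring

lemma le_apexRadius {R a : ℝ} (hR : 0 ≤ R) (ha₀ : 0 ≤ a) (ha : a ≤ 2 * π / 3) :
    R ≤ apexRadius R a := by
  have hcos : Real.cos (π / 3) ≤ Real.cos (π / 3 - a) := by
    rw [← Real.cos_abs (π / 3 - a)]
    refine Real.cos_le_cos_of_nonneg_of_le_pi (abs_nonneg _) (by linarith [pi_pos]) ?_
    exact abs_le.2 ⟨by linarith, by linarith⟩
  rw [Real.cos_pi_div_three] at hcos
  rw [apexRadius_eq_two_mul_cos]
  exact le_mul_of_one_le_right hR (by linarith)

lemma sq_add_apexRadius_sq_sub (R a : ℝ) :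
    R ^ 2 + apexRadius R a ^ 2 - 2 * R * apexRadius R a * Real.cos a
      = (2 * R * Real.sin a) ^ 2 := by
  rw [apexRadius]
  linear_combination R ^ 2 * Real.sin a ^ 2 * Real.sq_sqrt (zero_le_three (α := ℝ))
    - R ^ 2 * Real.sin_sq_add_cos_sq a

lemma circleMap_apexRadius (R a θ : ℝ) :
    circleMap 0 (apexRadius R a) θ = circleMap 0 R (θ - a)
      + Complex.exp (-((π : ℂ) / 3) * I) * (circleMap 0 R (θ + a) - circleMap 0 R (θ - a)) := by
  have hω : Complex.exp (-((π : ℂ) / 3) * I) = 1 / 2 - √3 / 2 * I := by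
    rw [Complex.exp_mul_I, Complex.cos_neg, Complex.sin_neg]
    have hcos := congrArg ((↑) : ℝ → ℂ) Real.cos_pi_div_three
    have hsin := congrArg ((↑) : ℝ → ℂ) Real.sin_pi_div_three
    push_cast at hcos hsin
    rw [hcos, hsin]
    ring
  have hexp (b : ℝ) : Complex.exp ((θ + b : ℝ) * I)
      = Complex.exp (θ * I) * (Complex.cos b + Complex.sin b * I) := by
    rw [← Complex.exp_mul_I, ← Complex.exp_add, Complex.ofReal_add, add_mul]
  simp only [circleMap_zero, apexRadius, hω, sub_eq_add_neg θ a, hexp]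
  push_cast
  rw [Complex.cos_neg, Complex.sin_neg]
  linear_combination R * Complex.exp (θ * I) * √3 * Complex.sin a * Complex.I_sq

/-- The distance from the centre to the `k`-th vertex of the augmented polygon: even indices are
vertices of the underlying polygon, odd ones are apices. -/
noncomputable def augmentedRadius (R a : ℝ) (k : ℤ) : ℝ := if Even k then R else apexRadius R a

/-- The `k`-th vertex of the polygon of circumradius `R` and half central angle `a` with an
equilateral triangle erected externally on each side. It closes up only for special `a`, such as
`a = π / n`, where it has `2 * n` vertices. -/
noncomputable def augmentedVertex (R a : ℝ) (k : ℤ) : ℂ :=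
  circleMap 0 (augmentedRadius R a k) (k * a)

lemma augmentedVertex_two_mul (R a : ℝ) (j : ℤ) :
    augmentedVertex R a (2 * j) = circleMap 0 R (2 * j * a) := by
  simp [augmentedVertex, augmentedRadius]

lemma augmentedVertex_two_mul_add_one (R a : ℝ) (j : ℤ) :
    augmentedVertex R a (2 * j + 1) = augmentedVertex R a (2 * j)
      + Complex.exp (-((π : ℂ) / 3) * I)
        * (augmentedVertex R a (2 * (j + 1)) - augmentedVertex R a (2 * j)) := by
  have hsub : 2 * (j : ℝ) * a = (2 * j + 1) * a - a := by ring
  have hadd : 2 * ((j + 1 : ℤ) : ℝ) * a = (2 * j + 1) * a + a := by push_cast; ring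
  rw [augmentedVertex_two_mul, augmentedVertex_two_mul, hsub, hadd, ← circleMap_apexRadius]
  rw [augmentedVertex, augmentedRadius, if_neg (Int.not_even_two_mul_add_one j)]
  push_cast
  rfl

section Distances

variable (R a : ℝ) {k l : ℤ}

lemma dist_augmentedVertex_sq_of_odd_sub (h : Odd (k - l)) :
    dist (augmentedVertex R a k) (augmentedVertex R a l) ^ 2
      = R ^ 2 + apexRadius R a ^ 2 - 2 * R * apexRadius R a * Real.cos ((k - l : ℤ) * a) := by
  rw [augmentedVertex, augmentedVertex, dist_circleMap_sq, ← sub_mul, ← Int.cast_sub]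
  by_cases hl : Even l
  · have hk : ¬ Even k := by grind
    simp only [augmentedRadius, hk, hl, if_true, if_false]
    ring
  · have hk : Even k := by grind
    simp only [augmentedRadius, hk, hl, if_true, if_false]

lemma dist_augmentedVertex_sq_of_even_sub (h : Even (k - l)) :
    dist (augmentedVertex R a k) (augmentedVertex R a l) ^ 2
      = 2 * augmentedRadius R a k ^ 2 * (1 - Real.cos ((k - l : ℤ) * a)) := by
  have hradius : augmentedRadius R a l = augmentedRadius R a k := by
    simp only [augmentedRadius, Int.even_sub.1 h]
  rw [augmentedVertex, augmentedVertex, dist_circleMap_sq, hradius, ← sub_mul, ← Int.cast_sub]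
  ring

lemma dist_augmentedVertex_add_one (k : ℤ) :
    dist (augmentedVertex R a (k + 1)) (augmentedVertex R a k) = |2 * R * Real.sin a| := by
  rw [← abs_of_nonneg dist_nonneg, ← sq_eq_sq_iff_abs_eq_abs, ← sq_add_apexRadius_sq_sub,
    dist_augmentedVertex_sq_of_odd_sub R a (by simp), add_sub_cancel_left, Int.cast_one, one_mul]

lemma dist_augmentedVertex_add_two (j : ℤ) :
    dist (augmentedVertex R a (2 * j + 2)) (augmentedVertex R a (2 * j))
      = |2 * R * Real.sin a| := by
  have hradius : augmentedRadius R a (2 * j + 2) = R := by simp [augmentedRadius]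
  rw [← abs_of_nonneg dist_nonneg, ← sq_eq_sq_iff_abs_eq_abs,
    dist_augmentedVertex_sq_of_even_sub R a (by simp), hradius, add_sub_cancel_left, Int.cast_ofNat,
    Real.cos_two_mul, Real.cos_sq']
  ring

end Distances

section Separation

variable {R : ℝ} {n : ℕ} {k l : ℤ}

lemma le_apexRadius_pi_div (hR : 0 ≤ R) (hn : 2 ≤ n) : R ≤ apexRadius R (π / n) := by
  have hn' : (2 : ℝ) ≤ n := by exact_mod_cast hn
  refine le_apexRadius hR (by positivity) ?_
  rw [div_le_iff₀ (by positivity)]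
  nlinarith [pi_pos]

lemma side_le_dist_augmentedVertex_of_odd_sub (hR : 0 ≤ R) (hn : 2 ≤ n) (h : Odd (k - l)) :
    2 * R * Real.sin (π / n)
      ≤ dist (augmentedVertex R (π / n) k) (augmentedVertex R (π / n) l) := by
  have hcos : Real.cos ((k - l : ℤ) * (π / n)) ≤ Real.cos ((1 : ℕ) * (π / n)) := by
    refine cos_int_mul_pi_div_le_cos (by lia) fun q => Int.one_le_abs fun hq => ?_
    grind
  rw [Nat.cast_one, one_mul] at hcos
  have hρ : 0 ≤ apexRadius R (π / n) := hR.trans (le_apexRadius_pi_div hR hn)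
  refine le_of_sq_le_sq ?_ dist_nonneg
  rw [dist_augmentedVertex_sq_of_odd_sub R _ h, ← sq_add_apexRadius_sq_sub]
  gcongr

lemma side_le_dist_augmentedVertex_of_even_sub (hR : 0 ≤ R) (hn : 2 ≤ n) (h : Even (k - l))
    (hkl : ¬ (2 * n : ℤ) ∣ k - l) :
    2 * R * Real.sin (π / n)
      ≤ dist (augmentedVertex R (π / n) k) (augmentedVertex R (π / n) l) := by
  have hcos : Real.cos ((k - l : ℤ) * (π / n)) ≤ Real.cos ((2 : ℕ) * (π / n)) := by
    refine cos_int_mul_pi_div_le_cos (by lia) fun q => ?_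
    have hne : k - l - 2 * n * q ≠ 0 := fun hq => hkl ⟨q, sub_eq_zero.1 hq⟩
    grind
  rw [Nat.cast_ofNat] at hcos
  have hradius : R ≤ augmentedRadius R (π / n) k := by
    unfold augmentedRadius
    split_ifs
    exacts [le_rfl, le_apexRadius_pi_div hR hn]
  refine le_of_sq_le_sq ?_ dist_nonneg
  calc (2 * R * Real.sin (π / n)) ^ 2 = 2 * R ^ 2 * (1 - Real.cos (2 * (π / n))) := by
        rw [Real.cos_two_mul, Real.cos_sq']
        ring
    _ ≤ 2 * augmentedRadius R (π / n) k ^ 2 * (1 - Real.cos ((k - l : ℤ) * (π / n))) := by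
        have hle_one := Real.cos_le_one (2 * (π / n))
        gcongr
    _ = dist (augmentedVertex R (π / n) k) (augmentedVertex R (π / n) l) ^ 2 :=
        (dist_augmentedVertex_sq_of_even_sub R _ h).symm

lemma side_le_dist_augmentedVertex (hR : 0 ≤ R) (hn : 2 ≤ n) (hkl : ¬ (2 * n : ℤ) ∣ k - l) :
    2 * R * Real.sin (π / n)
      ≤ dist (augmentedVertex R (π / n) k) (augmentedVertex R (π / n) l) :=
  (Int.even_or_odd (k - l)).elim
    (fun h => side_le_dist_augmentedVertex_of_even_sub hR hn h hkl)
    (side_le_dist_augmentedVertex_of_odd_sub hR hn)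

end Separation

lemma eq_augmentedVertex {n : ℕ} {R : ℝ} {B C A : ℤ → ℂ}
    (hB : ∀ j : ℤ, B j = (R : ℂ) * Complex.exp (2 * (π : ℂ) * (j : ℂ) / (n : ℂ) * I))
    (hC : ∀ j : ℤ, C j = B j + Complex.exp (-((π : ℂ) / 3) * I) * (B (j + 1) - B j))
    (hA : ∀ j : ℤ, A (2 * j) = B j ∧ A (2 * j + 1) = C j) :
    A = augmentedVertex R (π / n) := by
  have hB' : ∀ j : ℤ, B j = augmentedVertex R (π / n) (2 * j) := by
    intro j
    rw [hB, augmentedVertex_two_mul, circleMap_zero]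
    push_cast
    ring_nf
  funext k
  obtain ⟨j, rfl | rfl⟩ := Int.even_or_odd' k
  · rw [(hA j).1, hB']
  · rw [(hA j).2, hC, hB', hB', augmentedVertex_two_mul_add_one]

theorem equilateral_augmented_2g_gon_packing_4g_multiloops_general
    (n : ℕ) (hn : 2 ≤ n) (R s : ℝ) (hR : 0 < R)
    (hs : s = 2 * R * Real.sin (π / n))
    (B C A : ℤ → ℂ)
    (hB : ∀ j : ℤ, B j = (R : ℂ) * Complex.exp (2 * (π : ℂ) * (j : ℂ) / (n : ℂ) * I))
    (hC : ∀ j : ℤ, C j = B j + Complex.exp (-((π : ℂ) / 3) * I) * (B (j + 1) - B j))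
    (hA : ∀ j : ℤ, A (2 * j) = B j ∧ A (2 * j + 1) = C j) :
    (∀ k : ℤ, dist (A (k + 1)) (A k) = s) ∧
    (∀ j : ℤ, dist (A (2 * j + 2)) (A (2 * j)) = s) ∧
    (∀ k l : ℤ, ¬ ((2 * n : ℤ) ∣ (k - l)) → s ≤ dist (A k) (A l)) ∧
    (∀ k l : ℤ, ¬ ((2 * n : ℤ) ∣ (k - l)) →
      Disjoint (interior (closedBall (A k) (s / 2))) (interior (closedBall (A l) (s / 2)))) ∧
    (∀ k : ℤ, (closedBall (A k) (s / 2) ∩ closedBall (A (k + 1)) (s / 2)).Nonempty) ∧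
    (∀ j : ℤ, (closedBall (A (2 * j)) (s / 2) ∩ closedBall (A (2 * j + 2)) (s / 2)).Nonempty) := by
  obtain rfl := eq_augmentedVertex hB hC hA
  have hs_abs : |2 * R * Real.sin (π / n)| = s := by
    have hsin : 0 ≤ Real.sin (π / n) := Real.sin_nonneg_of_nonneg_of_le_pi (by positivity)
      (div_le_self pi_pos.le (by exact_mod_cast one_le_two.trans hn))
    rw [hs, abs_of_nonneg (by positivity)]
  have hside := fun k => (dist_augmentedVertex_add_one R (π / n) k).trans hs_abs
  have hbase := fun j => (dist_augmentedVertex_add_two R (π / n) j).trans hs_abs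
  have hsep := fun k l hkl =>
    hs.trans_le (side_le_dist_augmentedVertex (k := k) (l := l) hR.le hn hkl)
  exact ⟨hside, hbase, hsep, fun k l hkl => disjoint_interior_closedBall_half (hsep k l hkl),
    fun k => nonempty_closedBall_half_inter (hside k),
    fun j => nonempty_closedBall_half_inter (hbase j)⟩

/-- The packing realizing `4g` multi-loops on a surface in `H(2g-2)`: on the
`4g`-gon obtained from a regular `2g`-gon of circumradius `R` (side
`s = 2R·sin(π/(2g))`) by erecting an equilateral triangle externally on each side,
all `4g` sides have length `s`, the `2g` sides of the underlying `2g`-gon have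
length `s`, all pairs of distinct vertices are at distance `≥ s`, and hence the
`4g` disks of radius `s/2` centered at the vertices have pairwise disjoint
interiors and are tangent along each side of the `4g`-gon and along each side of
the underlying `2g`-gon, giving at least `6g` tangencies. -/
theorem equilateral_augmented_2g_gon_packing_4g_multiloops
    (g : ℕ) (hg : 2 ≤ g) (R s : ℝ) (hR : 0 < R)
    (hs : s = 2 * R * Real.sin (Real.pi / (2 * g)))
    (B C A : ℤ → ℂ)
    (hB : ∀ j : ℤ, B j = (R : ℂ) * Complex.exp ((Real.pi : ℂ) * (j : ℂ) / (g : ℂ) * Complex.I))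
    (hC : ∀ j : ℤ, C j = B j + Complex.exp (-((Real.pi : ℂ) / 3) * Complex.I) * (B (j + 1) - B j))
    (hA : ∀ j : ℤ, A (2 * j) = B j ∧ A (2 * j + 1) = C j) :
    -- (i) all 4g sides of the 4g-gon have length s
    (∀ k : ℤ, dist (A (k + 1)) (A k) = s) ∧
    -- (ii) all 2g sides of the underlying regular 2g-gon have length s
    (∀ j : ℤ, dist (A (2 * j + 2)) (A (2 * j)) = s) ∧
    -- (iii) distinct vertices (mod 4g) are at distance at least s
    (∀ k l : ℤ, ¬ ((4 * g : ℤ) ∣ (k - l)) → s ≤ dist (A k) (A l)) ∧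
    -- consequently: pairwise disjoint interiors of the disks of radius s/2
    (∀ k l : ℤ, ¬ ((4 * g : ℤ) ∣ (k - l)) →
      Disjoint (interior (closedBall (A k) (s / 2))) (interior (closedBall (A l) (s / 2)))) ∧
    -- and each pair (A k, A (k+1)) and (A (2j), A (2j+2)) is a tangent pair of disks
    (∀ k : ℤ, (closedBall (A k) (s / 2) ∩ closedBall (A (k + 1)) (s / 2)).Nonempty) ∧
    (∀ j : ℤ, (closedBall (A (2 * j)) (s / 2) ∩ closedBall (A (2 * j + 2)) (s / 2)).Nonempty) := by
  have hdvd : (2 * (2 * g : ℕ) : ℤ) = 4 * g := by push_cast; ring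
  simpa only [hdvd] using equilateral_augmented_2g_gon_packing_4g_multiloops_general (2 * g)
    (by lia) R s hR (mod_cast hs) B C A
    (fun j => by rw [hB, Nat.cast_mul, Nat.cast_two, mul_assoc, mul_div_mul_left _ _ two_ne_zero])
    hC hA
end
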